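/- Let K ≥ 3 and let a, b : ℤ/Kℤ → ℝ² be two closed polygons given by their cyclically ordered vertices. Define the shoelace area A(p) = (1/2)·Σ_{k ∈ ℤ/Kℤ} det(p_k, p_{k+1}). Then A(b) − A(a) = (1/4)·Σ_{k ∈ ℤ/Kℤ} det( (b_k − a_k) + (b_{k+1} − a_{k+1}) , (a_{k+1} − a_k) + (b_{k+1} − b_k) ), where det(u,v) = u₁v₂ − u₂v₁. -/

import Mathlib

/-- The two-dimensional determinant `det(u,v) = u₁v₂ − u₂v₁`. -/
def det2 (u v : ℝ × ℝ) : ℝ := u.1 * v.2 - u.2 * v.1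

/-- Planar instance of Lemma 3.2: for two closed polygons with cyclically
ordered vertices `a`, `b`, the difference of the shoelace areas equals
`(1/4) Σₖ det((bₖ−aₖ)+(bₖ₊₁−aₖ₊₁), (aₖ₊₁−aₖ)+(bₖ₊₁−bₖ))`. -/
theorem shoelace_area_difference (K : ℕ) (hK : 3 ≤ K) (a b : ZMod K → ℝ × ℝ) :
    haveI : NeZero K := ⟨by omega⟩
    ((1:ℝ)/2) * ∑ k : ZMod K, det2 (b k) (b (k+1)) -
      ((1:ℝ)/2) * ∑ k : ZMod K, det2 (a k) (a (k+1))
    = ((1:ℝ)/4) * ∑ k : ZMod K,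
        det2 ((b k - a k) + (b (k+1) - a (k+1)))
             ((a (k+1) - a k) + (b (k+1) - b k)) := by
  haveI : NeZero K := ⟨by omega⟩
  have h : ∑ k : ZMod K, det2 (b (k+1)) (a (k+1)) = ∑ k : ZMod K, det2 (b k) (a k) :=
    Equiv.sum_comp (Equiv.addRight (1 : ZMod K)) (fun k => det2 (b k) (a k))
  have e : ∑ k : ZMod K, det2 ((b k - a k) + (b (k+1) - a (k+1)))
             ((a (k+1) - a k) + (b (k+1) - b k))
      = 2 * ∑ k : ZMod K, det2 (b k) (b (k+1)) - 2 * ∑ k : ZMod K, det2 (a k) (a (k+1))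
        + 2 * (∑ k : ZMod K, det2 (b (k+1)) (a (k+1)) - ∑ k : ZMod K, det2 (b k) (a k)) := by
    simp only [Finset.mul_sum, ← Finset.sum_sub_distrib, ← Finset.sum_add_distrib]
    refine Finset.sum_congr rfl fun k _ => ?_
    simp only [det2, Prod.fst_add, Prod.snd_add, Prod.fst_sub, Prod.snd_sub]
    ring
  rw [h] at e
  show _ = _
  rw [e]
  ring
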